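/- Let f : V → ℝ, p a nonnegative integer, and suppose 0 < λ₁ < λ and some u₁ : V → ℝ solves Δu₁(x) = λ₁·e^{u₁(x)}·(e^{u₁(x)} − 1)^{2p+1} + f(x) for all x ∈ V. Then the functional J_λ has a local minimum point u_λ (with respect to the sup norm on functions V → ℝ); in particular, the equation Δu(x) = λ·e^{u(x)}·(e^{u(x)} − 1)^{2p+1} + f(x) (for all x ∈ V) has a solution, and u_λ(x) > u₁(x) + ln(λ₁/λ) for all x ∈ V. -/

import Mathlib

/-!
The shifted function `φ = u₁ + log (lam₁ / lam)` is a strict subsolution of the equation at level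
`lam`: it has the Laplacian of `u₁`, and `lam * exp φ = lam₁ * exp u₁`, while
`exp φ - 1 < exp u₁ - 1` and odd powers are strictly increasing. A large constant `M` is a strict
supersolution. Since the box `φ ≤ u ≤ M` is compact, the functional attains its minimum over it at
some `u`. If `u x = φ x`, then `Δu x ≥ Δφ x` because `u - φ` is minimal at `x`, so the derivative of
the functional in the direction of the indicator of `x` is negative, contradicting minimality;
in the same way `u x = M` is impossible. Hence `u` is interior to the box: it is a local minimum,
and the vanishing of the directional derivatives is the equation. The derivative is
`hasDerivAt_Jfun`, and its sign at a minimum over the box is `eqResidual_nonneg` and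
`eqResidual_nonpos`.
-/

open Real

/-- Graph Laplacian: `Δu(x) = (1/μ(x)) Σ_y w x y (u y − u x)`. -/
noncomputable def glap {V : Type*} [Fintype V] (w : V → V → ℝ) (μ : V → ℝ)
    (u : V → ℝ) (x : V) : ℝ :=
  (1 / μ x) * ∑ y, w x y * (u y - u x)

/-- Integral over the graph: `∫_V g dμ = Σ_x μ(x) g(x)`. -/
noncomputable def gint {V : Type*} [Fintype V] (μ : V → ℝ) (g : V → ℝ) : ℝ :=
  ∑ x, μ x * g x

/-- Gradient norm squared: `|∇u|²(x) = (1/(2μ(x))) Σ_y w x y (u y − u x)²`. -/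
noncomputable def gradsq {V : Type*} [Fintype V] (w : V → V → ℝ) (μ : V → ℝ)
    (u : V → ℝ) (x : V) : ℝ :=
  (1 / (2 * μ x)) * ∑ y, w x y * (u y - u x) ^ 2

/-- The functional `J_λ(u) = (1/2)∫|∇u|² + (λ/(2p+2))∫(e^u−1)^{2p+2} + ∫ f u dμ`. -/
noncomputable def Jfun {V : Type*} [Fintype V] (w : V → V → ℝ) (μ : V → ℝ)
    (p : ℕ) (lam : ℝ) (f : V → ℝ) (u : V → ℝ) : ℝ :=
  (1 / 2) * gint μ (gradsq w μ u)
    + (lam / (2 * p + 2)) * gint μ (fun x => (Real.exp (u x) - 1) ^ (2 * p + 2))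
    + gint μ (fun x => f x * u x)

/-- The residual `-Δu + lam e^u (e^u - 1)^{2p+1} + f` of the equation, which is the gradient of
`Jfun` with respect to the inner product weighted by `μ`. -/
noncomputable def eqResidual {V : Type*} [Fintype V] (w : V → V → ℝ) (μ : V → ℝ)
    (p : ℕ) (lam : ℝ) (f u : V → ℝ) (x : V) : ℝ :=
  -glap w μ u x + lam * Real.exp (u x) * (Real.exp (u x) - 1) ^ (2 * p + 1) + f x

section

variable {V : Type*} [Fintype V] {w : V → V → ℝ} {μ : V → ℝ} {p : ℕ} {lam : ℝ} {f : V → ℝ}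

lemma gint_gradsq (hμ : ∀ x, 0 < μ x) (u : V → ℝ) :
    gint μ (gradsq w μ u) = (1 / 2) * ∑ x, ∑ y, w x y * (u y - u x) ^ 2 := by
  unfold gint gradsq
  rw [Finset.mul_sum]
  refine Finset.sum_congr rfl fun x _ => ?_
  have := (hμ x).ne'
  field_simp

/-- Green formula on the graph. -/
lemma sum_mul_sub_mul_sub (hsymm : ∀ x y, w x y = w y x) (hμ : ∀ x, 0 < μ x) (u h : V → ℝ) :
    ∑ x, ∑ y, w x y * ((u y - u x) * (h y - h x))
      = -2 * ∑ x, h x * (μ x * glap w μ u x) := by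
  have e1 : ∑ x, ∑ y, w x y * ((u y - u x) * h y)
      = -∑ x, ∑ y, w x y * ((u y - u x) * h x) := by
    rw [Finset.sum_comm, ← Finset.sum_neg_distrib]
    refine Finset.sum_congr rfl fun x _ => ?_
    rw [← Finset.sum_neg_distrib]
    refine Finset.sum_congr rfl fun y _ => ?_
    rw [hsymm y x]; ring
  have e2 : ∑ x, ∑ y, w x y * ((u y - u x) * h x) = ∑ x, h x * (μ x * glap w μ u x) := by
    refine Finset.sum_congr rfl fun x _ => ?_
    have := (hμ x).ne'
    unfold glap
    rw [← mul_assoc (μ x), mul_one_div_cancel this, one_mul, Finset.mul_sum]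
    exact Finset.sum_congr rfl fun y _ => by ring
  simp only [mul_sub, Finset.sum_sub_distrib] at e1 e2 ⊢
  linarith

lemma hasDerivAt_Jfun (hsymm : ∀ x y, w x y = w y x) (hμ : ∀ x, 0 < μ x) (u h : V → ℝ) :
    HasDerivAt (fun t : ℝ => Jfun w μ p lam f (fun y => u y + t * h y))
      (∑ x, h x * (μ x * eqResidual w μ p lam f u x)) 0 := by
  have hl : ∀ y, HasDerivAt (fun t : ℝ => u y + t * h y) (h y) 0 := fun y => by
    simpa using ((hasDerivAt_id (0 : ℝ)).mul_const (h y)).const_add (u y)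
  have h1 : HasDerivAt (fun t : ℝ => ∑ x, ∑ y, w x y *
      ((u y + t * h y) - (u x + t * h x)) ^ 2)
      (∑ x, ∑ y, w x y * (2 * ((u y - u x) * (h y - h x)))) 0 := by
    refine HasDerivAt.fun_sum fun x _ => HasDerivAt.fun_sum fun y _ => ?_
    refine ((((hl y).sub (hl x)).pow 2).const_mul (w x y)).congr_deriv ?_
    simp [mul_assoc]
  have h2 : HasDerivAt (fun t : ℝ => ∑ x, μ x *
      (Real.exp (u x + t * h x) - 1) ^ (2 * p + 2))
      (∑ x, μ x * ((2 * p + 2) * (Real.exp (u x) - 1) ^ (2 * p + 1) * (Real.exp (u x) * h x)))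
      0 := by
    refine HasDerivAt.fun_sum fun x _ => ?_
    refine (((((hl x).exp).sub_const 1).pow (2 * p + 2)).const_mul (μ x)).congr_deriv ?_
    simp
  have h3 : HasDerivAt (fun t : ℝ => ∑ x, μ x * (f x * (u x + t * h x)))
      (∑ x, μ x * (f x * h x)) 0 :=
    HasDerivAt.fun_sum fun x _ => ((hl x).const_mul (f x)).const_mul (μ x)
  have key := (((h1.const_mul (1 / 2)).const_mul (1 / 2)).add
    (h2.const_mul (lam / (2 * p + 2)))).add h3
  have hfun : (fun t : ℝ => Jfun w μ p lam f (fun y => u y + t * h y)) = fun t =>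
      (1 / 2) * ((1 / 2) * ∑ x, ∑ y, w x y * ((u y + t * h y) - (u x + t * h x)) ^ 2)
      + (lam / (2 * p + 2)) * ∑ x, μ x * (Real.exp (u x + t * h x) - 1) ^ (2 * p + 2)
      + ∑ x, μ x * (f x * (u x + t * h x)) := by
    funext t
    rw [Jfun, gint_gradsq hμ]
    rfl
  rw [hfun]
  refine key.congr_deriv ?_
  have g := sum_mul_sub_mul_sub hsymm hμ u h
  have e : ∑ x, ∑ y, w x y * (2 * ((u y - u x) * (h y - h x)))
      = 2 * ∑ x, ∑ y, w x y * ((u y - u x) * (h y - h x)) := by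
    simp only [Finset.mul_sum]
    exact Finset.sum_congr rfl fun x _ => Finset.sum_congr rfl fun y _ => by ring
  have hp : (2 * (p : ℝ) + 2) ≠ 0 := by positivity
  rw [e, g]
  have a : (1 / 2 : ℝ) * (1 / 2 * (2 * (-2 * ∑ x, h x * (μ x * glap w μ u x))))
      = -∑ x, h x * (μ x * glap w μ u x) := by ring
  rw [a, Finset.mul_sum, ← Finset.sum_neg_distrib, ← Finset.sum_add_distrib,
    ← Finset.sum_add_distrib]
  refine Finset.sum_congr rfl fun x _ => ?_
  unfold eqResidual
  field_simp

lemma continuous_Jfun : Continuous (Jfun w μ p lam f) := by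
  unfold Jfun gint gradsq
  fun_prop

/-- First-order condition at a point `u` that minimizes along a segment issuing from it. -/
lemma deriv_nonneg_of_min (hsymm : ∀ x y, w x y = w y x) (hμ : ∀ x, 0 < μ x) (u h : V → ℝ)
    {ε : ℝ} (hε : 0 < ε)
    (hmin : ∀ t, 0 < t → t < ε → Jfun w μ p lam f u ≤ Jfun w μ p lam f (fun y => u y + t * h y)) :
    0 ≤ ∑ x, h x * (μ x * eqResidual w μ p lam f u x) := by
  have hd := (hasDerivAt_Jfun (p := p) (lam := lam) (f := f) hsymm hμ u h).tendsto_slope_zero_right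
  refine ge_of_tendsto hd ?_
  filter_upwards [Ioo_mem_nhdsGT hε] with t ht
  have := hmin t ht.1 ht.2
  simp only [zero_add, zero_mul, add_zero, smul_eq_mul]
  exact mul_nonneg (inv_nonneg.2 ht.1.le) (sub_nonneg.2 this)

/-- At a minimizer over a box, a coordinate below its upper bound may be increased. -/
lemma eqResidual_nonneg (hsymm : ∀ x y, w x y = w y x) (hμ : ∀ x, 0 < μ x)
    {a b u : V → ℝ} (hu : u ∈ Set.Icc a b)
    (hmin : ∀ v ∈ Set.Icc a b, Jfun w μ p lam f u ≤ Jfun w μ p lam f v)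
    {x : V} (hx : u x < b x) : 0 ≤ eqResidual w μ p lam f u x := by
  classical
  have := deriv_nonneg_of_min (p := p) (lam := lam) (f := f) hsymm hμ u (Pi.single x 1)
    (sub_pos.2 hx) fun t ht0 ht => hmin _ ⟨fun y => ?_, fun y => ?_⟩
  · rw [Finset.sum_eq_single x (fun y _ hy => by simp [hy]) (by simp), Pi.single_eq_same,
      one_mul] at this
    exact nonneg_of_mul_nonneg_right this (hμ x)
  all_goals
    have h1 := hu.1 y
    have h2 := hu.2 y
    rcases eq_or_ne y x with rfl | hy
    · simp only [Pi.single_eq_same]; linarith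
    · simpa [hy]

/-- At a minimizer over a box, a coordinate above its lower bound may be decreased. -/
lemma eqResidual_nonpos (hsymm : ∀ x y, w x y = w y x) (hμ : ∀ x, 0 < μ x)
    {a b u : V → ℝ} (hu : u ∈ Set.Icc a b)
    (hmin : ∀ v ∈ Set.Icc a b, Jfun w μ p lam f u ≤ Jfun w μ p lam f v)
    {x : V} (hx : a x < u x) : eqResidual w μ p lam f u x ≤ 0 := by
  classical
  have := deriv_nonneg_of_min (p := p) (lam := lam) (f := f) hsymm hμ u (Pi.single x (-1))
    (sub_pos.2 hx) fun t ht0 ht => hmin _ ⟨fun y => ?_, fun y => ?_⟩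
  · rw [Finset.sum_eq_single x (fun y _ hy => by simp [hy]) (by simp), Pi.single_eq_same] at this
    by_contra! hc
    have := mul_pos (hμ x) hc
    linarith
  all_goals
    have h1 := hu.1 y
    have h2 := hu.2 y
    rcases eq_or_ne y x with rfl | hy
    · simp only [Pi.single_eq_same]; linarith
    · simpa [hy]

/-- Comparison principle at a point of contact. -/
lemma eqResidual_le_of_le (hnonneg : ∀ x y, 0 ≤ w x y) (hμ : ∀ x, 0 < μ x) {u v : V → ℝ}
    (huv : u ≤ v) {x : V} (hx : u x = v x) :
    eqResidual w μ p lam f v x ≤ eqResidual w μ p lam f u x := by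
  have : glap w μ u x ≤ glap w μ v x := by
    unfold glap
    refine mul_le_mul_of_nonneg_left (Finset.sum_le_sum fun y _ => ?_)
      (one_div_nonneg.2 (hμ x).le)
    refine mul_le_mul_of_nonneg_left ?_ (hnonneg x y)
    have := huv y
    linarith
  unfold eqResidual
  rw [hx]
  linarith

/-- The shift of a solution at level `lam₁` by `log (lam₁ / lam)` is a strict subsolution at
level `lam`. -/
lemma eqResidual_shift_neg {lam₁ : ℝ} (h₁ : 0 < lam₁) (h₂ : lam₁ < lam) {u₁ : V → ℝ} {x : V}
    (hu₁ : glap w μ u₁ x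
        = lam₁ * Real.exp (u₁ x) * (Real.exp (u₁ x) - 1) ^ (2 * p + 1) + f x) :
    eqResidual w μ p lam f (fun y => u₁ y + Real.log (lam₁ / lam)) x < 0 := by
  have hl : 0 < lam := h₁.trans h₂
  have hg : glap w μ (fun y => u₁ y + Real.log (lam₁ / lam)) x = glap w μ u₁ x := by
    simp [glap]
  have he : lam * Real.exp (u₁ x + Real.log (lam₁ / lam)) = lam₁ * Real.exp (u₁ x) := by
    rw [Real.exp_add, Real.exp_log (div_pos h₁ hl)]
    field_simp
  have hlt : Real.exp (u₁ x + Real.log (lam₁ / lam)) < Real.exp (u₁ x) := by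
    have : Real.log (lam₁ / lam) < 0 := Real.log_neg (div_pos h₁ hl) ((div_lt_one hl).2 h₂)
    exact Real.exp_lt_exp.2 (by linarith)
  have hodd : Odd (2 * p + 1) := ⟨p, rfl⟩
  have hpow := hodd.strictMono_pow (sub_lt_sub_right hlt 1)
  have := mul_lt_mul_of_pos_left hpow (mul_pos h₁ (Real.exp_pos (u₁ x)))
  simp only [eqResidual]
  rw [hg, hu₁, he]
  linarith

/-- A large constant is a strict supersolution. -/
lemma eqResidual_const_pos (hl : 0 < lam) {M : ℝ} (hM : 1 ≤ M) {x : V} (hf : |f x| / lam ≤ M) :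
    0 < eqResidual w μ p lam f (fun _ => M) x := by
  have he := Real.add_one_le_exp M
  have hpow : 1 ≤ (Real.exp M - 1) ^ (2 * p + 1) := one_le_pow₀ (by linarith)
  have h1 : |f x| ≤ M * lam := (div_le_iff₀ hl).1 hf
  have h2 : lam * (M + 1) ≤ lam * Real.exp M := mul_le_mul_of_nonneg_left he hl.le
  have h3 : lam * Real.exp M * 1 ≤ lam * Real.exp M * (Real.exp M - 1) ^ (2 * p + 1) :=
    mul_le_mul_of_nonneg_left hpow (by positivity)
  have h4 := neg_abs_le (f x)
  have hg : glap w μ (fun _ => M) x = 0 := by simp [glap]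
  unfold eqResidual
  rw [hg]
  linarith

end

theorem stmt_16 {V : Type*} [Fintype V] [Nonempty V]
    (w : V → V → ℝ) (μ : V → ℝ)
    (hsymm : ∀ x y, w x y = w y x) (hnonneg : ∀ x y, 0 ≤ w x y)
    (hμ : ∀ x, 0 < μ x)
    (hconn : (SimpleGraph.fromRel (fun x y => 0 < w x y)).Connected)
    (p : ℕ) (f : V → ℝ) (lam lam₁ : ℝ) (h₁ : 0 < lam₁) (h₂ : lam₁ < lam)
    (u₁ : V → ℝ)
    (hu₁ : ∀ x, glap w μ u₁ x
        = lam₁ * Real.exp (u₁ x) * (Real.exp (u₁ x) - 1) ^ (2 * p + 1) + f x) :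
    ∃ ulam : V → ℝ,
      IsLocalMin (Jfun w μ p lam f) ulam
      ∧ (∀ x, glap w μ ulam x
          = lam * Real.exp (ulam x) * (Real.exp (ulam x) - 1) ^ (2 * p + 1) + f x)
      ∧ (∀ x, u₁ x + Real.log (lam₁ / lam) < ulam x) := by
  have hl : 0 < lam := h₁.trans h₂
  set φ : V → ℝ := fun y => u₁ y + Real.log (lam₁ / lam) with hφ
  set M : ℝ := 1 + ∑ x, |φ x| + ∑ x, |f x| / lam with hM
  have s1 : ∀ x, |φ x| ≤ ∑ x, |φ x| := fun x =>
    Finset.single_le_sum (f := fun x => |φ x|) (fun _ _ => abs_nonneg _) (Finset.mem_univ x)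
  have s2 : ∀ x, |f x| / lam ≤ ∑ x, |f x| / lam := fun x =>
    Finset.single_le_sum (f := fun x => |f x| / lam) (fun _ _ => by positivity)
      (Finset.mem_univ x)
  have n1 : 0 ≤ ∑ x, |φ x| := Finset.sum_nonneg fun _ _ => abs_nonneg _
  have n2 : 0 ≤ ∑ x, |f x| / lam := Finset.sum_nonneg fun _ _ => by positivity
  have hφM : ∀ x, φ x < M := fun x => by linarith [s1 x, le_abs_self (φ x)]
  obtain ⟨u, hu, hmin⟩ := (isCompact_Icc (a := φ) (b := fun _ => M)).exists_isMinOn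
    ⟨φ, le_rfl, fun x => (hφM x).le⟩ (continuous_Jfun (w := w) (μ := μ) (p := p) (lam := lam)
      (f := f)).continuousOn
  have hmin' : ∀ v ∈ Set.Icc φ (fun _ => M), Jfun w μ p lam f u ≤ Jfun w μ p lam f v :=
    fun v hv => hmin hv
  have hlow : ∀ x, φ x < u x := fun x => by
    refine lt_of_le_of_ne (hu.1 x) fun heq => ?_
    have k1 := eqResidual_nonneg hsymm hμ hu hmin' (x := x) (heq ▸ hφM x)
    have k2 := eqResidual_le_of_le (p := p) (lam := lam) (f := f) hnonneg hμ hu.1 heq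
    have k3 := eqResidual_shift_neg h₁ h₂ (hu₁ x)
    exact absurd (k1.trans k2) (not_le.2 k3)
  have hupp : ∀ x, u x < M := fun x => by
    refine lt_of_le_of_ne (hu.2 x) fun heq => ?_
    have k1 := eqResidual_nonpos hsymm hμ hu hmin' (hlow x)
    have k2 := eqResidual_le_of_le (p := p) (lam := lam) (f := f) hnonneg hμ hu.2 heq
    have k3 := eqResidual_const_pos (w := w) (μ := μ) (p := p) (f := f) hl (M := M)
      (by linarith) (x := x) (by linarith [s2 x])
    exact absurd (k2.trans k1) (not_le.2 k3)
  refine ⟨u, ?_, fun x => ?_, hlow⟩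
  · have hev : ∀ᶠ v in nhds u, ∀ x, v x ∈ Set.Ioo (φ x) M :=
      Filter.eventually_all.2 fun x =>
        (continuous_apply x).continuousAt.eventually_mem (Ioo_mem_nhds (hlow x) (hupp x))
    filter_upwards [hev] with v hv
    exact hmin' v ⟨fun x => (hv x).1.le, fun x => (hv x).2.le⟩
  · have k1 := eqResidual_nonneg hsymm hμ hu hmin' (hupp x)
    have k2 := eqResidual_nonpos hsymm hμ hu hmin' (hlow x)
    unfold eqResidual at k1 k2
    linarith
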